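/- Let G ⊆ ℝ^N be open and connected and v a nontrivial real-analytic solution of Δv + k²v = 0 on G. Suppose the nodal domains of v form a countable family. Then the nodal domains can be enumerated A₁, A₂, … such that for every j ≥ 2 there exists i < j and an analytic regular portion Σ_j of the nodal set {v = 0} (an open connected hypersurface consisting of zeros of v where ∇v ≠ 0) with Σ_j ⊆ ∂A_i ∩ ∂A_j. -/

import Mathlib

open Metric Set

noncomputable def lap {N : ℕ} (v : EuclideanSpace ℝ (Fin N) → ℝ)
    (x : EuclideanSpace ℝ (Fin N)) : ℝ :=
  ∑ i, iteratedFDeriv ℝ 2 v x ![EuclideanSpace.single i 1, EuclideanSpace.single i 1]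

/-- A regular portion of the nodal set of `v` in `G`: a nonempty connected
relatively open subset of the nodal set consisting of regular (noncritical)
nodal points. -/
def IsRegularPortion {N : ℕ} (G : Set (EuclideanSpace ℝ (Fin N)))
    (v : EuclideanSpace ℝ (Fin N) → ℝ) (S : Set (EuclideanSpace ℝ (Fin N))) : Prop :=
  S.Nonempty ∧ IsConnected S ∧
    (∃ U, IsOpen U ∧ S = U ∩ {x ∈ G | v x = 0}) ∧
    ∀ z ∈ S, gradient v z ≠ 0

/-!
Split the nodal domains into two nonempty classes and let `U`, `W` be the unions of these classes.
Since `v` vanishes on no nonempty open subset of `G`, `G ⊆ closure U ∪ closure W`, so by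
connectedness the closures meet in `G`, and `v` vanishes on their common part `F`.

Some point of `F` is a regular zero of `v`. Otherwise call a solution `u` flat if `u = 0` and
`du = 0` on `F`; then `v` is flat, and directional derivatives of flat solutions are flat. For the
latter the Hessian of a flat `u` has to vanish on `F`. If `d(∂_w u) ≠ 0` at `p ∈ F`, then
`∂_w u = 0` on `F` and `F` separates `U` from `W`, so near `p` the hypersurface `{∂_w u = 0}` is
contained in `F`; hence `du = 0` along it, the Hessian at `p` has rank at most one, and its trace
`Δ u (p) = -c u(p)` is zero, so it vanishes. Thus all derivatives of `v` vanish on `F`, and `v = 0`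
by unique continuation.

Near a regular zero in `F`, the nodal set of `v` is a connected hypersurface whose two sides lie in
single nodal domains, one from each class. So the graph of nodal domains sharing a regular portion
is connected; being countable, it can be enumerated with each vertex adjacent to an earlier one, by
numbering the vertices according to codes of paths from a fixed root.
-/

open scoped ContDiff InnerProductSpace Laplacian Topology

/-- `PathCode R e r b m` says that `m` encodes an `R`-path from `r` to `b`: the vertices of the
path, numbered by `e`, are paired one after the other, so that a path has a larger code than its
proper initial segments. It is used to enumerate a connected graph. -/
inductive PathCode {α : Type*} (R : α → α → Prop) (e : α → ℕ) (r : α) : α → ℕ → Prop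
  | root : PathCode R e r r 0
  | step {a b : α} {m : ℕ} : PathCode R e r a m → R a b → PathCode R e r b (Nat.pair m (e b) + 1)

namespace PathCode

variable {α : Type*} {R : α → α → Prop} {e : α → ℕ} {r : α}

theorem exists_of_reflTransGen {b : α} (h : Relation.ReflTransGen R r b) :
    ∃ m, PathCode R e r b m := by
  induction h with
  | refl => exact ⟨0, root⟩
  | tail _ hab ih => exact ih.imp' _ fun m hm ↦ hm.step hab

theorem eq_of_code_eq (he : Function.Injective e) {b b' : α} {m : ℕ}
    (h : PathCode R e r b m) (h' : PathCode R e r b' m) : b = b' := by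
  cases h with
  | root => cases h'; rfl
  | step =>
    generalize hm : Nat.pair _ _ + 1 = m at h'
    cases h' with
    | root => simp at hm
    | step => exact he (Nat.pair_eq_pair.1 (Nat.succ_injective hm)).2

end PathCode

section Enumeration

theorem exists_injective_rank {α : Type*} [Countable α] {R : α → α → Prop}
    (hR : ∀ a b, Relation.ReflTransGen R a b) :
    ∃ f : α → ℕ, Function.Injective f ∧ ∀ b, f b ≠ 0 → ∃ a, R a b ∧ f a < f b := by
  rcases isEmpty_or_nonempty α with _ | ⟨⟨r⟩⟩
  · exact ⟨isEmptyElim, Function.injective_of_subsingleton _, isEmptyElim⟩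
  obtain ⟨e, he⟩ := exists_injective_nat α
  have hcode (b : α) : {m | PathCode R e r b m}.Nonempty :=
    PathCode.exists_of_reflTransGen (hR r b)
  have hmin (b : α) : PathCode R e r b (sInf {m | PathCode R e r b m}) := Nat.sInf_mem (hcode b)
  refine ⟨fun b ↦ sInf {m | PathCode R e r b m}, fun b b' h ↦ ?_, fun b hb ↦ ?_⟩
  · exact (hmin b).eq_of_code_eq he (by simpa only [h] using hmin b')
  · dsimp only at hb ⊢
    generalize hm : sInf {m | PathCode R e r b m} = m at hb ⊢
    cases hm ▸ hmin b with
    | root => exact absurd rfl hb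
    | @step a _ m ha hab =>
      exact ⟨a, hab, Nat.lt_succ_of_le ((Nat.sInf_le ha).trans (Nat.left_le_pair _ _))⟩

theorem exists_injective_range_eq_lt_card {α : Type*} {f : α → ℕ} (hf : Function.Injective f) :
    ∃ c : α → ℕ, Function.Injective c ∧ range c = {j : ℕ | (j : ℕ∞) < ENat.card α} ∧
      (∀ a, c a ≤ f a) ∧ ∀ a b, f a < f b → c a < c b := by
  classical
  have hcard (j : ℕ) : (j : ℕ∞) < ENat.card α ↔ ∀ h : (range f).Finite, j < h.toFinset.card := by
    rw [← encard_univ, ← hf.encard_image, image_univ]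
    by_cases h : (range f).Finite
    · simp [h, h.encard_eq_coe_toFinset_card]
    · simp [h, encard_eq_top_iff.2 h]
  have hlt (a b : α) (h : f a < f b) : (f a).count (· ∈ range f) < (f b).count (· ∈ range f) :=
    Nat.count_strict_mono (mem_range_self a) h
  refine ⟨fun a ↦ (f a).count (· ∈ range f), fun a b h ↦ hf ?_, ?_, fun a ↦ Nat.count_le _, hlt⟩
  · exact Nat.count_injective (mem_range_self a) (mem_range_self b) h
  · ext j
    rw [mem_ofPred_eq, hcard]
    constructor
    · rintro ⟨a, rfl⟩ h
      exact Nat.count_lt_card h (mem_range_self a)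
    · intro h
      obtain ⟨a, ha⟩ := Nat.nth_mem (p := (· ∈ range f)) j h
      exact ⟨a, by simp only [ha]; exact Nat.count_nth h⟩

theorem reflTransGen_of_forall_cut {α : Type*} {R : α → α → Prop}
    (hR : ∀ V : Set α, V.Nonempty → V ≠ univ → ∃ a ∈ V, ∃ b ∉ V, R a b) (a b : α) :
    Relation.ReflTransGen R a b := by
  by_contra hb
  obtain ⟨x, hx, y, hy, hxy⟩ := hR {y | Relation.ReflTransGen R a y} ⟨a, .refl⟩
    fun h ↦ hb (h ▸ mem_univ b : b ∈ {y | Relation.ReflTransGen R a y})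
  exact hy (hx.tail hxy)

theorem exists_enumeration_of_forall_cut {β : Type*} [Nonempty β] {D : Set β} (hD : D.Countable)
    {R : β → β → Prop}
    (hR : ∀ V ⊆ D, V.Nonempty → V ≠ D → ∃ a ∈ V, ∃ b ∈ D \ V, R a b) :
    ∃ (n : ℕ∞) (A : ℕ → β),
      (∀ j : ℕ, (j : ℕ∞) < n → A j ∈ D) ∧
      (∀ s ∈ D, ∃ j : ℕ, (j : ℕ∞) < n ∧ A j = s) ∧
      (∀ i j : ℕ, (i : ℕ∞) < n → (j : ℕ∞) < n → A i = A j → i = j) ∧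
      (∀ j : ℕ, 1 ≤ j → (j : ℕ∞) < n → ∃ i < j, R (A i) (A j)) := by
  have := hD.to_subtype
  have hreach : ∀ a b : D, Relation.ReflTransGen (fun a b : D ↦ R a b) a b := by
    refine reflTransGen_of_forall_cut fun V hne hV ↦ ?_
    obtain ⟨_, ⟨a, ha, rfl⟩, b, ⟨hb, hbV⟩, hab⟩ := hR ((↑) '' V) (Subtype.coe_image_subset D V)
      (hne.image _) fun h ↦
        hV (Subtype.val_injective.image_injective (h.trans (Subtype.coe_image_univ D).symm))
    exact ⟨a, ha, ⟨b, hb⟩, fun h ↦ hbV ⟨_, h, rfl⟩, hab⟩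
  obtain ⟨f, hf, hpred⟩ := exists_injective_rank hreach
  obtain ⟨c, hc, hrange, hle, hlt⟩ := exists_injective_range_eq_lt_card hf
  let A : ℕ → β := Function.extend c (↑) fun _ ↦ Classical.arbitrary β
  have hA (a : D) : A (c a) = a := hc.extend_apply _ _ a
  have hsurj (j : ℕ) (hj : (j : ℕ∞) < ENat.card D) : ∃ a, c a = j := hrange.ge hj
  refine ⟨ENat.card D, A, fun j hj ↦ ?_, fun s hs ↦ ?_, fun i j hi hj h ↦ ?_, fun j hj1 hj ↦ ?_⟩
  · obtain ⟨a, rfl⟩ := hsurj j hj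
    exact hA a ▸ a.2
  · exact ⟨c ⟨s, hs⟩, hrange.le (mem_range_self _), hA _⟩
  · obtain ⟨⟨a, rfl⟩, b, rfl⟩ := And.intro (hsurj i hi) (hsurj j hj)
    rw [hA, hA] at h
    rw [Subtype.ext h]
  · obtain ⟨b, rfl⟩ := hsurj j hj
    obtain ⟨a, hab, hfab⟩ := hpred b (by have := hle b; lia)
    exact ⟨c a, hlt a b hfab, by rwa [hA, hA]⟩

end Enumeration

section DirDeriv

variable {E F : Type*} [NormedAddCommGroup E] [NormedSpace ℝ E]
  [NormedAddCommGroup F] [NormedSpace ℝ F]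

/-- The directional derivative `∂_w u`, as a function of the point alone so that it can be iterated.
It takes the value `0` where `u` is not differentiable. -/
noncomputable def dirDeriv (w : E) (u : E → F) (x : E) : F := fderiv ℝ u x w

theorem fderiv_dirDeriv {u : E → F} {x : E} (hu : ContDiffAt ℝ 2 u x) (a w : E) :
    fderiv ℝ (dirDeriv w u) x a = fderiv ℝ (fderiv ℝ u) x a w := by
  have hd : DifferentiableAt ℝ (fderiv ℝ u) x :=
    (hu.fderiv_right (m := 1) le_rfl).differentiableAt one_ne_zero
  have := congr($((hd.hasFDerivAt.clm_apply (hasFDerivAt_const w x)).fderiv) a)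
  simpa using! this

theorem dirDeriv_comm {u : E → F} {x : E} (hu : ContDiffAt ℝ 2 u x) (a b : E) :
    dirDeriv a (dirDeriv b u) x = dirDeriv b (dirDeriv a u) x := by
  simp only [dirDeriv, fderiv_dirDeriv hu]
  exact hu.isSymmSndFDerivAt (by simp) a b

theorem contDiffAt_dirDeriv {n : WithTop ℕ∞} {u : E → F} {x : E}
    (hu : ContDiffAt ℝ (n + 1) u x) (w : E) : ContDiffAt ℝ n (dirDeriv w u) x :=
  (hu.fderiv_right le_rfl).clm_apply contDiffAt_const

theorem analyticAt_dirDeriv [CompleteSpace F] {u : E → F} {x : E} (hu : AnalyticAt ℝ u x) (w : E) :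
    AnalyticAt ℝ (dirDeriv w u) x :=
  ((ContinuousLinearMap.apply ℝ F w).analyticAt _).comp hu.fderiv

theorem iteratedFDeriv_eq_zero_of_forall_mem {𝒮 : Set (E → F)} {p : E}
    (hsmooth : ∀ u ∈ 𝒮, ContDiffAt ℝ ∞ u p) (hzero : ∀ u ∈ 𝒮, u p = 0)
    (hderiv : ∀ u ∈ 𝒮, ∀ w, dirDeriv w u ∈ 𝒮) (n : ℕ) : ∀ u ∈ 𝒮, iteratedFDeriv ℝ n u p = 0 := by
  induction n with
  | zero =>
    intro u hu
    ext m
    simp [hzero u hu]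
  | succ n ih =>
    intro u hu
    ext m
    rw [iteratedFDeriv_succ_apply_right]
    have h := (ContinuousLinearMap.apply ℝ F (m (Fin.last n))).iteratedFDeriv_comp_left
      ((hsmooth u hu).fderiv_right (m := n) (by exact_mod_cast le_top)) le_rfl
    have h0 := ih _ (hderiv u hu (m (Fin.last n)))
    have := congr($(h.symm.trans h0) (Fin.init m))
    simpa using! this

theorem eventuallyEq_zero_of_forall_mem [CompleteSpace F] {𝒮 : Set (E → F)} {p : E}
    (han : ∀ u ∈ 𝒮, AnalyticAt ℝ u p) (hzero : ∀ u ∈ 𝒮, u p = 0)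
    (hderiv : ∀ u ∈ 𝒮, ∀ w, dirDeriv w u ∈ 𝒮) {u : E → F} (hu : u ∈ 𝒮) : u =ᶠ[𝓝 p] 0 := by
  obtain ⟨P, r, hP⟩ := han u hu
  have htaylor : ∀ y ∈ Metric.eball (0 : E) r, u (p + y) = 0 := by
    intro y hy
    have h := hP.hasSum_iteratedFDeriv hy
    have hP0 (n : ℕ) : iteratedFDeriv ℝ n u p = 0 :=
      iteratedFDeriv_eq_zero_of_forall_mem (fun u hu ↦ (han u hu).contDiffAt) hzero hderiv n u hu
    simp only [hP0, zero_apply, smul_zero] at h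
    exact h.unique hasSum_zero
  filter_upwards [Metric.eball_mem_nhds p hP.r_pos] with x hx
  simpa using htaylor (x - p) (by simpa [edist_eq_enorm_sub] using hx)

theorem apply_eq_zero_of_eventually_zero_imp_zero [CompleteSpace E] {g f : E → ℝ}
    {g' f' : E →L[ℝ] ℝ} {p : E}
    (hg : HasStrictFDerivAt g g' p) (hf : HasStrictFDerivAt f f' p) (hg' : g' ≠ 0)
    (hgp : g p = 0) (hfg : ∀ᶠ x in 𝓝 p, g x = 0 → f x = 0) {a : E} (ha : g' a = 0) : f' a = 0 := by
  have hext : IsLocalExtrOn f {x | g x = g p} p := .inl <| by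
    filter_upwards [hfg.filter_mono nhdsWithin_le_nhds, self_mem_nhdsWithin] with x hx hxp
    rw [hfg.self_of_nhds hgp, hx (hxp.trans hgp)]
  obtain ⟨s, t, hst, h⟩ := hext.exists_multipliers_of_hasStrictFDerivAt_1d hg hf
  have ht : t ≠ 0 := by
    rintro rfl
    have hs : s ≠ 0 := by rintro rfl; exact hst rfl
    exact hg' ((smul_eq_zero.1 (by simpa using h)).resolve_left hs)
  simpa [ha, ht] using congr($h a)

end DirDeriv

section Laplacian

variable {E F : Type*} [NormedAddCommGroup E] [InnerProductSpace ℝ E] [FiniteDimensional ℝ E]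
  [NormedAddCommGroup F] [NormedSpace ℝ F]

open InnerProductSpace

theorem laplacian_eq_sum_fderiv_fderiv {ι : Type*} [Fintype ι] (b : OrthonormalBasis ι ℝ E)
    (u : E → F) (x : E) : Δ u x = ∑ i, fderiv ℝ (fderiv ℝ u) x (b i) (b i) := by
  simp [laplacian_eq_iteratedFDeriv_orthonormalBasis u b, iteratedFDeriv_two_apply]

theorem laplacian_dirDeriv {u : E → F} {x : E} (hu : ContDiffAt ℝ 3 u x) (w : E) :
    Δ (dirDeriv w u) x = dirDeriv w (Δ u) x := by
  have hu2 : ∀ᶠ y in 𝓝 x, ContDiffAt ℝ 2 u y :=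
    (hu.of_le (by norm_num)).eventually (by simp)
  have hdu (a : E) : ContDiffAt ℝ 2 (dirDeriv a u) x := contDiffAt_dirDeriv hu a
  let b := stdOrthonormalBasis ℝ E
  have hlap : Δ u =ᶠ[𝓝 x] ∑ i, dirDeriv (b i) (dirDeriv (b i) u) := by
    filter_upwards [hu2] with y hy
    rw [laplacian_eq_sum_fderiv_fderiv b, Finset.sum_apply]
    exact Finset.sum_congr rfl fun i _ ↦ (fderiv_dirDeriv hy _ _).symm
  have hcomm (a : E) : dirDeriv a (dirDeriv w u) =ᶠ[𝓝 x] dirDeriv w (dirDeriv a u) := by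
    filter_upwards [hu2] with y hy using dirDeriv_comm hy a w
  calc Δ (dirDeriv w u) x
      = ∑ i, dirDeriv (b i) (dirDeriv (b i) (dirDeriv w u)) x := by
        rw [laplacian_eq_sum_fderiv_fderiv b]
        exact Finset.sum_congr rfl fun i _ ↦ (fderiv_dirDeriv (hdu w) _ _).symm
    _ = ∑ i, dirDeriv (b i) (dirDeriv w (dirDeriv (b i) u)) x :=
        Finset.sum_congr rfl fun i _ ↦ congr($((hcomm (b i)).fderiv_eq) (b i))
    _ = ∑ i, dirDeriv w (dirDeriv (b i) (dirDeriv (b i) u)) x :=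
        Finset.sum_congr rfl fun i _ ↦ dirDeriv_comm (hdu (b i)) _ _
    _ = dirDeriv w (∑ i, dirDeriv (b i) (dirDeriv (b i) u)) x := by
        have hd (i) : DifferentiableAt ℝ (dirDeriv (b i) (dirDeriv (b i) u)) x :=
          (contDiffAt_dirDeriv (n := 1) (hdu (b i)) _).differentiableAt one_ne_zero
        simp only [dirDeriv, fderiv_sum fun i _ ↦ hd i, sum_apply]
    _ = dirDeriv w (Δ u) x := congr($(hlap.symm.fderiv_eq) w)

end Laplacian

theorem eq_zero_of_ker_le_ker_of_sum_eq_zero {𝕜 M ι : Type*} [Field 𝕜] [LinearOrder 𝕜]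
    [IsStrictOrderedRing 𝕜] [AddCommGroup M] [Module 𝕜 M] [Fintype ι] (b : Module.Basis ι 𝕜 M)
    {Q : M →ₗ[𝕜] M →ₗ[𝕜] 𝕜} (hsymm : ∀ x y, Q x y = Q y x) {ℓ : M →ₗ[𝕜] 𝕜} (hℓ : ℓ ≠ 0)
    (hker : ℓ.ker ≤ Q.ker) (htrace : ∑ i, Q (b i) (b i) = 0) : Q = 0 := by
  obtain ⟨n, hn⟩ : ∃ n, ℓ n ≠ 0 := by simpa using! DFunLike.ne_iff.1 hℓ
  have hleft (x y : M) : Q x y = ℓ x / ℓ n * Q n y := by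
    have hx : x - (ℓ x / ℓ n) • n ∈ ℓ.ker := by simp [hn]
    simpa [sub_eq_zero] using congr($(LinearMap.mem_ker.1 (hker hx)) y)
  have hrank_one (x y : M) : Q x y = Q n n / ℓ n ^ 2 * (ℓ x * ℓ y) := by
    rw [hleft, hsymm, hleft]
    field_simp
  have hsq : ∑ i, ℓ (b i) ^ 2 ≠ 0 := fun h ↦ hℓ <| b.ext fun i ↦ by
    simpa using (Finset.sum_eq_zero_iff_of_nonneg fun i _ ↦ sq_nonneg (ℓ (b i))).1 h i
  have hnn : Q n n / ℓ n ^ 2 = 0 := by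
    refine (mul_eq_zero.1 ?_).resolve_right hsq
    rw [Finset.mul_sum, ← htrace]
    exact Finset.sum_congr rfl fun i _ ↦ by rw [hrank_one (b i), sq (ℓ (b i))]
  ext x y
  rw [hrank_one, hnn, zero_mul]
  rfl

section NodalChart

variable {E : Type*} [NormedAddCommGroup E] [NormedSpace ℝ E]

theorem exists_isOpen_forall_isPreconnected_inter_preimage {F : Type*} [CompleteSpace E]
    [NormedAddCommGroup F] [NormedSpace ℝ F] [FiniteDimensional ℝ F] {g : E → F} {g' : E →L[ℝ] F}
    {p : E} (hg : HasStrictFDerivAt g g' p) (hg' : (g' : E →ₗ[ℝ] F).range = ⊤) {V : Set E}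
    (hV : V ∈ 𝓝 p) :
    ∃ B ⊆ V, IsOpen B ∧ p ∈ B ∧ ∀ T : Set F, Convex ℝ T → IsPreconnected (B ∩ g ⁻¹' T) := by
  let φ := hg.implicitToOpenPartialHomeomorph g g' hg'
  have hp : p ∈ φ.source := hg.mem_implicitToOpenPartialHomeomorph_source hg'
  have hφp := φ.map_source hp
  have hsymm : φ.symm ⁻¹' V ∈ 𝓝 (φ p) :=
    (φ.continuousAt_symm hφp).preimage_mem_nhds (by rwa [φ.left_inv hp])
  obtain ⟨ε, hε, hball⟩ :=
    Metric.mem_nhds_iff.1 (Filter.inter_mem (φ.open_target.mem_nhds hφp) hsymm)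
  have htarget : ball (φ p) ε ⊆ φ.target := hball.trans inter_subset_left
  have hfst {y} (hy : y ∈ ball (φ p) ε) : g (φ.symm y) = y.1 := by
    rw [← hg.implicitToOpenPartialHomeomorph_fst hg', φ.right_inv (htarget hy)]
  refine ⟨φ.symm '' ball (φ p) ε, image_subset_iff.2 (hball.trans inter_subset_right),
    φ.symm.isOpen_image_of_subset_source isOpen_ball htarget,
    ⟨φ p, mem_ball_self hε, φ.left_inv hp⟩, fun T hT ↦ ?_⟩
  have himage : φ.symm '' ball (φ p) ε ∩ g ⁻¹' T =
      φ.symm '' (ball (φ p) ε ∩ Prod.fst ⁻¹' T) := by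
    rw [← image_inter_preimage]
    congr 1
    ext y
    exact and_congr_right fun hy ↦ by rw [mem_preimage, mem_preimage, hfst hy, mem_preimage]
  rw [himage]
  exact ((convex_ball _ _).inter (hT.linear_preimage (LinearMap.fst ℝ F _))).isPreconnected.image _
    (φ.continuousOn_symm.mono (inter_subset_left.trans htarget))

/-- An open set `B` on which `g` has no critical point and on which the nodal set of `g` and each of
its two sides are connected. -/
structure IsNodalChart (g : E → ℝ) (B : Set E) : Prop where
  isOpen : IsOpen B
  fderiv_ne_zero : ∀ x ∈ B, fderiv ℝ g x ≠ 0
  isPreconnected_pos : IsPreconnected (B ∩ {x | 0 < g x})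
  isPreconnected_neg : IsPreconnected (B ∩ {x | g x < 0})
  isPreconnected_zero : IsPreconnected (B ∩ {x | g x = 0})

theorem exists_isNodalChart [CompleteSpace E] {g : E → ℝ} {p : E} (hg : ContDiffAt ℝ 1 g p)
    (hg' : fderiv ℝ g p ≠ 0) {V : Set E} (hV : V ∈ 𝓝 p) : ∃ B ⊆ V, IsNodalChart g B ∧ p ∈ B := by
  have hsurj : (fderiv ℝ g p : E →ₗ[ℝ] ℝ).range = ⊤ :=
    LinearMap.range_eq_top.2 <| LinearMap.surjective <| by exact_mod_cast hg'
  have hregular : {x | fderiv ℝ g x ≠ 0} ∈ 𝓝 p :=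
    (hg.fderiv_right (m := 0) le_rfl).continuousAt.eventually_ne hg'
  obtain ⟨B, hBV, hB, hpB, hconn⟩ := exists_isOpen_forall_isPreconnected_inter_preimage
    (hg.hasStrictFDerivAt one_ne_zero) hsurj (Filter.inter_mem hV hregular)
  exact ⟨B, hBV.trans inter_subset_left, ⟨hB, fun x hx ↦ (hBV hx).2, hconn _ (convex_Ioi 0),
    hconn _ (convex_Iio 0), hconn _ (convex_singleton 0)⟩, hpB⟩

namespace IsNodalChart

variable {g : E → ℝ} {B : Set E}

theorem neg (h : IsNodalChart g B) : IsNodalChart (-g) B where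
  isOpen := h.isOpen
  fderiv_ne_zero x hx := by simpa only [fderiv_neg, neg_ne_zero] using h.fderiv_ne_zero x hx
  isPreconnected_pos := by simpa only [Pi.neg_apply, neg_pos] using h.isPreconnected_neg
  isPreconnected_neg := by simpa only [Pi.neg_apply, neg_lt_zero] using h.isPreconnected_pos
  isPreconnected_zero := by simpa only [Pi.neg_apply, neg_eq_zero] using h.isPreconnected_zero

theorem zero_subset_closure_pos (h : IsNodalChart g B) :
    B ∩ {x | g x = 0} ⊆ closure (B ∩ {x | 0 < g x}) := by
  rintro x ⟨hxB, hx : g x = 0⟩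
  by_contra hcl
  have hmax : IsLocalMax g x := by
    filter_upwards [h.isOpen.mem_nhds hxB, isClosed_closure.isOpen_compl.mem_nhds hcl]
      with y hyB hy
    exact hx ▸ not_lt.1 fun hpos ↦ hy (subset_closure ⟨hyB, hpos⟩)
  exact h.fderiv_ne_zero x hxB hmax.fderiv_eq_zero

theorem zero_subset_closure_neg (h : IsNodalChart g B) :
    B ∩ {x | g x = 0} ⊆ closure (B ∩ {x | g x < 0}) := by
  simpa only [Pi.neg_apply, neg_pos, neg_eq_zero] using h.neg.zero_subset_closure_pos

theorem exists_mem_ne_zero (h : IsNodalChart g B) {W : Set E} (hW : IsOpen W)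
    (hBW : (B ∩ closure W).Nonempty) : ∃ x ∈ B ∩ W, g x ≠ 0 := by
  obtain ⟨p, hpB, hpW⟩ := hBW
  obtain ⟨y, hyB, hyW⟩ := mem_closure_iff.1 hpW B h.isOpen hpB
  by_cases hy : g y = 0
  · obtain ⟨x, hxW, hxB, hx⟩ := mem_closure_iff.1 (h.zero_subset_closure_pos ⟨hyB, hy⟩) W hW hyW
    exact ⟨x, ⟨hxB, hxW⟩, hx.ne'⟩
  · exact ⟨y, ⟨hyB, hyW⟩, hy⟩

theorem exists_side_of_mem (h : IsNodalChart g B) {x : E} (hxB : x ∈ B) (hx : g x ≠ 0) :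
    ∃ T ⊆ B ∩ {x | g x ≠ 0}, x ∈ T ∧ IsPreconnected T ∧ B ∩ {x | g x = 0} ⊆ closure T := by
  rcases hx.lt_or_gt with hneg | hpos
  · exact ⟨_, inter_subset_inter_right _ fun _ ↦ ne_of_lt, ⟨hxB, hneg⟩, h.isPreconnected_neg,
      h.zero_subset_closure_neg⟩
  · exact ⟨_, inter_subset_inter_right _ fun _ ↦ ne_of_gt, ⟨hxB, hpos⟩, h.isPreconnected_pos,
      h.zero_subset_closure_pos⟩

theorem zero_subset_closure_of_cover (h : IsNodalChart g B) {U W : Set E} (hW : IsOpen W)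
    (hcover : B ⊆ closure U ∪ closure W) (hzero : ∀ x ∈ B ∩ (closure U ∩ closure W), g x = 0)
    (hBW : (B ∩ closure W).Nonempty) : B ∩ {x | g x = 0} ⊆ closure W := by
  obtain ⟨x, ⟨hxB, hxW⟩, hx⟩ := h.exists_mem_ne_zero hW hBW
  obtain ⟨T, hTB, hxT, hT, hcl⟩ := h.exists_side_of_mem hxB hx
  have hdisj : T ∩ (closure U ∩ closure W) = ∅ := eq_empty_iff_forall_notMem.2
    fun y hy ↦ (hTB hy.1).2 (hzero y ⟨(hTB hy.1).1, hy.2⟩)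
  refine hcl.trans (closure_minimal ?_ isClosed_closure)
  refine (isPreconnected_iff_subset_of_disjoint_closed.1 hT _ _ isClosed_closure isClosed_closure
    (fun y hy ↦ hcover (hTB hy).1) hdisj).resolve_left fun hTU ↦ ?_
  exact hdisj.subset ⟨hxT, hTU hxT, subset_closure hxW⟩

end IsNodalChart

end NodalChart

section Helmholtz

variable {E : Type*} [NormedAddCommGroup E] [InnerProductSpace ℝ E] [FiniteDimensional ℝ E]
  {c : ℝ} {u v : E → ℝ} {G U W : Set E}

/-- `u` is a real-analytic solution of the Helmholtz equation `Δ u + c u = 0` on `G`. -/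
structure IsHelmholtzSolution (c : ℝ) (u : E → ℝ) (G : Set E) : Prop where
  analyticOnNhd : AnalyticOnNhd ℝ u G
  laplacian_add_mul : ∀ x ∈ G, Δ u x + c * u x = 0

protected theorem IsHelmholtzSolution.dirDeriv (h : IsHelmholtzSolution c u G) (hG : IsOpen G)
    (w : E) :
    IsHelmholtzSolution c (dirDeriv w u) G where
  analyticOnNhd x hx := analyticAt_dirDeriv (h.analyticOnNhd x hx) w
  laplacian_add_mul x hx := by
    have hu := h.analyticOnNhd x hx
    have hlap : Δ u =ᶠ[𝓝 x] (-c) • u := by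
      filter_upwards [hG.mem_nhds hx] with y hy
      simpa [eq_neg_iff_add_eq_zero] using! h.laplacian_add_mul y hy
    have hderiv : dirDeriv w (Δ u) x = -c * dirDeriv w u x := by
      rw [dirDeriv, hlap.fderiv_eq, fderiv_const_smul hu.differentiableAt]
      rfl
    rw [laplacian_dirDeriv hu.contDiffAt, hderiv, neg_mul, neg_add_cancel]

theorem fderiv_fderiv_eq_zero_of_laplacian_eq_zero {p : E} (hu : ContDiffAt ℝ 2 u p)
    (hlap : Δ u p = 0) {ℓ : E →L[ℝ] ℝ} (hℓ : ℓ ≠ 0)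
    (hker : ∀ a, ℓ a = 0 → fderiv ℝ (fderiv ℝ u) p a = 0) : fderiv ℝ (fderiv ℝ u) p = 0 := by
  let b := stdOrthonormalBasis ℝ E
  have hQ : (fderiv ℝ (fderiv ℝ u) p).toLinearMap₁₂ = 0 :=
    eq_zero_of_ker_le_ker_of_sum_eq_zero b.toBasis (ℓ := ℓ.toLinearMap)
      (hu.isSymmSndFDerivAt (by simp)) (by exact_mod_cast hℓ)
      (fun a ha ↦ by ext w; exact congr($(hker a ha) w))
      (by simpa [laplacian_eq_sum_fderiv_fderiv b] using! hlap)
  ext a w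
  exact congr($hQ a w)

/- Otherwise some `∂_w u` has nonzero gradient `ℓ` at `p`. Near `p` its nodal set lies in the common
boundary, where `du = 0`, so the Hessian of `u` at `p` vanishes on `ker ℓ`; it then has rank at most
one, and it is trace-free. -/
theorem fderiv_fderiv_eq_zero_of_mem_closure_inter_closure (hG : IsOpen G) (hU : IsOpen U)
    (hW : IsOpen W) (hcover : G ⊆ closure U ∪ closure W) (hu : AnalyticOnNhd ℝ u G)
    (hcrit : ∀ x ∈ G ∩ (closure U ∩ closure W), fderiv ℝ u x = 0) {p : E}
    (hp : p ∈ G ∩ (closure U ∩ closure W)) (hlap : Δ u p = 0) : fderiv ℝ (fderiv ℝ u) p = 0 := by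
  by_contra hne
  have hup : ContDiffAt ℝ 2 u p := (hu p hp.1).contDiffAt
  have hgrad (w : E) : ContDiffAt ℝ 1 (dirDeriv w u) p :=
    (analyticAt_dirDeriv (hu p hp.1) w).contDiffAt
  have hzero (w : E) : ∀ x ∈ G ∩ (closure U ∩ closure W), dirDeriv w u x = 0 := fun x hx ↦ by
    rw [dirDeriv, hcrit x hx, zero_apply]
  obtain ⟨w, hw⟩ : ∃ w, fderiv ℝ (dirDeriv w u) p ≠ 0 := by
    by_contra! h
    refine hne ?_
    ext a w
    rw [← fderiv_dirDeriv hup, h w]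
    rfl
  obtain ⟨B, hBG, hB, hpB⟩ := exists_isNodalChart (hgrad w) hw (hG.mem_nhds hp.1)
  have hBzero : ∀ x ∈ B ∩ (closure U ∩ closure W), dirDeriv w u x = 0 :=
    fun x hx ↦ hzero w x ⟨hBG hx.1, hx.2⟩
  have hnodal : B ∩ {x | dirDeriv w u x = 0} ⊆ closure U ∩ closure W := subset_inter
    (hB.zero_subset_closure_of_cover hU (union_comm _ _ ▸ hBG.trans hcover)
      (by rwa [inter_comm (closure W)]) ⟨p, hpB, hp.2.1⟩)
    (hB.zero_subset_closure_of_cover hW (hBG.trans hcover) hBzero ⟨p, hpB, hp.2.2⟩)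
  refine hne (fderiv_fderiv_eq_zero_of_laplacian_eq_zero hup hlap hw fun a ha ↦ ?_)
  ext b
  rw [← fderiv_dirDeriv hup, zero_apply]
  refine apply_eq_zero_of_eventually_zero_imp_zero ((hgrad w).hasStrictFDerivAt one_ne_zero)
    ((hgrad b).hasStrictFDerivAt one_ne_zero) hw (hzero w p hp) ?_ ha
  filter_upwards [hB.isOpen.mem_nhds hpB] with x hxB hx
  exact hzero b x ⟨hBG hxB, hnodal ⟨hxB, hx⟩⟩

theorem IsHelmholtzSolution.exists_fderiv_ne_zero (h : IsHelmholtzSolution c v G) (hG : IsOpen G)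
    (hG' : IsPreconnected G) (hv : ∃ x ∈ G, v x ≠ 0) (hU : IsOpen U) (hW : IsOpen W)
    (hcover : G ⊆ closure U ∪ closure W) (hzero : ∀ x ∈ G ∩ (closure U ∩ closure W), v x = 0)
    (hne : (G ∩ (closure U ∩ closure W)).Nonempty) :
    ∃ p ∈ G ∩ (closure U ∩ closure W), fderiv ℝ v p ≠ 0 := by
  by_contra! hcrit
  obtain ⟨p, hp⟩ := hne
  let 𝒮 : Set (E → ℝ) := {u | IsHelmholtzSolution c u G ∧
    ∀ x ∈ G ∩ (closure U ∩ closure W), u x = 0 ∧ fderiv ℝ u x = 0}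
  have hderiv : ∀ u ∈ 𝒮, ∀ w, dirDeriv w u ∈ 𝒮 := by
    rintro u ⟨hu, hu0⟩ w
    refine ⟨hu.dirDeriv hG w, fun x hx ↦ ⟨by rw [dirDeriv, (hu0 x hx).2, zero_apply], ?_⟩⟩
    have hlap : Δ u x = 0 := by simpa [(hu0 x hx).1] using hu.laplacian_add_mul x hx.1
    have hhess := fderiv_fderiv_eq_zero_of_mem_closure_inter_closure hG hU hW hcover
      hu.analyticOnNhd (fun y hy ↦ (hu0 y hy).2) hx hlap
    ext a
    rw [fderiv_dirDeriv (hu.analyticOnNhd x hx.1).contDiffAt, hhess]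
    rfl
  have hvp : v =ᶠ[𝓝 p] 0 := eventuallyEq_zero_of_forall_mem
    (fun u hu ↦ hu.1.analyticOnNhd p hp.1) (fun u hu ↦ (hu.2 p hp).1) hderiv
    ⟨h, fun x hx ↦ ⟨hzero x hx, hcrit x hx⟩⟩
  obtain ⟨x, hx, hvx⟩ := hv
  exact hvx (h.analyticOnNhd.eqOn_zero_of_preconnected_of_eventuallyEq_zero hG' hp.1 hvp hx)

end Helmholtz

section Topology

theorem notMem_union_of_mem_closure_inter_closure {X : Type*} [TopologicalSpace X] {U W : Set X}
    (hU : IsOpen U) (hW : IsOpen W) (hUW : Disjoint U W) {x : X}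
    (hx : x ∈ closure U ∩ closure W) : x ∉ U ∪ W := by
  rintro (hxU | hxW)
  · exact (hUW.closure_right hU).le_bot ⟨hxU, hx.2⟩
  · exact (hUW.closure_left hW).le_bot ⟨hx.1, hxW⟩

variable {X : Type*} [TopologicalSpace X] {O : Set X}

theorem pairwiseDisjoint_image_connectedComponentIn :
    (connectedComponentIn O '' O).PairwiseDisjoint id := by
  rintro _ ⟨x, -, rfl⟩ _ ⟨y, -, rfl⟩ hne
  refine disjoint_left.2 fun z hx hy ↦ hne ?_
  rw [connectedComponentIn_eq hx, connectedComponentIn_eq hy]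

theorem sUnion_image_connectedComponentIn : ⋃₀ (connectedComponentIn O '' O) = O := by
  refine subset_antisymm (sUnion_subset ?_) fun x hx ↦
    ⟨_, mem_image_of_mem _ hx, mem_connectedComponentIn hx⟩
  rintro _ ⟨x, -, rfl⟩
  exact connectedComponentIn_subset O x

theorem isOpen_of_mem_image_connectedComponentIn [LocallyConnectedSpace X] (hO : IsOpen O) :
    ∀ s ∈ connectedComponentIn O '' O, IsOpen s := by
  rintro _ ⟨x, -, rfl⟩
  exact hO.connectedComponentIn

theorem countable_image_connectedComponentIn [LocallyConnectedSpace X]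
    [TopologicalSpace.SeparableSpace X] (hO : IsOpen O) :
    (connectedComponentIn O '' O).Countable := by
  refine pairwiseDisjoint_image_connectedComponentIn.countable_of_isOpen
    (isOpen_of_mem_image_connectedComponentIn hO) ?_
  rintro _ ⟨x, hx, rfl⟩
  exact ⟨x, mem_connectedComponentIn hx⟩

end Topology

theorem subset_closure_setOf_ne_zero {𝕜 E F : Type*} [NontriviallyNormedField 𝕜]
    [NormedAddCommGroup E] [NormedSpace 𝕜 E] [NormedAddCommGroup F] [NormedSpace 𝕜 F] {f : E → F}
    {G : Set E} (hf : AnalyticOnNhd 𝕜 f G) (hG : IsOpen G) (hG' : IsPreconnected G)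
    (hne : ∃ x ∈ G, f x ≠ 0) : G ⊆ closure {x ∈ G | f x ≠ 0} := by
  intro p hp
  by_contra hcl
  have hfp : f =ᶠ[𝓝 p] 0 := by
    filter_upwards [hG.mem_nhds hp, isClosed_closure.isOpen_compl.mem_nhds hcl] with x hx hxcl
    exact not_not.1 fun h ↦ hxcl (subset_closure ⟨hx, h⟩)
  obtain ⟨x, hx, hfx⟩ := hne
  exact hfx (hf.eqOn_zero_of_preconnected_of_eventuallyEq_zero hG' hp hfp hx)

section NodalDomain

/-- The nodal domains of `v` on `G`: the connected components of `{x ∈ G | v x ≠ 0}`. -/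
def nodalDomains {X : Type*} [TopologicalSpace X] (G : Set X) (v : X → ℝ) : Set (Set X) :=
  connectedComponentIn {x ∈ G | v x ≠ 0} '' {x ∈ G | v x ≠ 0}

theorem exists_mem_nodalDomains_subset_frontier {X : Type*} [TopologicalSpace X] {G : Set X}
    {v : X → ℝ} {T Z : Set X} {x : X}
    (hT : T ⊆ {x ∈ G | v x ≠ 0}) (hT' : IsPreconnected T) (hx : x ∈ T)
    (hZ : Z ⊆ {x | v x = 0}) (hZT : Z ⊆ closure T) :
    ∃ s ∈ nodalDomains G v, x ∈ s ∧ Z ⊆ frontier s := by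
  have hTs := hT'.subset_connectedComponentIn hx hT
  refine ⟨_, mem_image_of_mem _ (hT hx), hTs hx, fun z hz ↦ ⟨closure_mono hTs (hZT hz), ?_⟩⟩
  exact fun hzs ↦ (connectedComponentIn_subset _ _ (interior_subset hzs)).2 (hZ hz)

variable {E : Type*} [NormedAddCommGroup E] [NormedSpace ℝ E]

/-- A regular portion of the nodal set of `v` on `G`: a connected relatively open subset of the
nodal set without critical points. It is stated with `fderiv` instead of `gradient` so as to make
sense in every normed space. -/
def IsRegularNodalPortion (G : Set E) (v : E → ℝ) (S : Set E) : Prop :=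
  IsConnected S ∧ (∃ U, IsOpen U ∧ S = U ∩ {x ∈ G | v x = 0}) ∧ ∀ x ∈ S, fderiv ℝ v x ≠ 0

variable {G B : Set E} {v : E → ℝ}

theorem IsNodalChart.exists_nodalDomain_of_mem_closure {W : Set E}
    (h : IsNodalChart v B) (hBG : B ⊆ G) (hW : IsOpen W) (hBW : (B ∩ closure W).Nonempty) :
    ∃ s ∈ nodalDomains G v, (s ∩ W).Nonempty ∧ B ∩ {x | v x = 0} ⊆ frontier s := by
  obtain ⟨x, ⟨hxB, hxW⟩, hx⟩ := h.exists_mem_ne_zero hW hBW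
  obtain ⟨T, hTB, hxT, hT, hcl⟩ := h.exists_side_of_mem hxB hx
  obtain ⟨s, hs, hxs, hfr⟩ := exists_mem_nodalDomains_subset_frontier
    (hTB.trans (inter_subset_inter_left _ hBG)) hT hxT inter_subset_right hcl
  exact ⟨s, hs, ⟨x, hxs, hxW⟩, hfr⟩

theorem IsNodalChart.isRegularNodalPortion (h : IsNodalChart v B)
    (hBG : B ⊆ G) (hne : (B ∩ {x | v x = 0}).Nonempty) :
    IsRegularNodalPortion G v (B ∩ {x | v x = 0}) := by
  refine ⟨⟨hne, h.isPreconnected_zero⟩, ⟨B, h.isOpen, ?_⟩, fun x hx ↦ h.fderiv_ne_zero x hx.1⟩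
  ext x
  exact and_congr_right fun hx ↦ (and_iff_right (hBG hx)).symm

end NodalDomain

section HelmholtzNodalDomain

variable {E : Type*} [NormedAddCommGroup E] [InnerProductSpace ℝ E] [FiniteDimensional ℝ E]
  {c : ℝ} {v : E → ℝ} {G : Set E}

theorem IsHelmholtzSolution.isOpen_setOf_ne_zero (h : IsHelmholtzSolution c v G) (hG : IsOpen G) :
    IsOpen {x ∈ G | v x ≠ 0} :=
  h.analyticOnNhd.continuousOn.isOpen_inter_preimage hG isOpen_ne

theorem IsHelmholtzSolution.exists_isRegularNodalPortion_of_disjoint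
    (h : IsHelmholtzSolution c v G) (hG : IsOpen G) (hG' : IsPreconnected G) {U W : Set E}
    (hU : IsOpen U) (hW : IsOpen W) (hUW : Disjoint U W) (hunion : U ∪ W = {x ∈ G | v x ≠ 0})
    (hUne : U.Nonempty) (hWne : W.Nonempty) :
    ∃ s ∈ nodalDomains G v, (s ∩ U).Nonempty ∧ ∃ t ∈ nodalDomains G v, (t ∩ W).Nonempty ∧
      ∃ S, IsRegularNodalPortion G v S ∧ S ⊆ frontier s ∩ frontier t := by
  have hUG {x} (hx : x ∈ U) : x ∈ G ∧ v x ≠ 0 := hunion.subset (.inl hx)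
  have hWG {x} (hx : x ∈ W) : x ∈ G ∧ v x ≠ 0 := hunion.subset (.inr hx)
  have hne : ∃ x ∈ G, v x ≠ 0 := hUne.imp fun _ ↦ hUG
  have hcover : G ⊆ closure U ∪ closure W := by
    rw [← closure_union, hunion]
    exact subset_closure_setOf_ne_zero h.analyticOnNhd hG hG' hne
  have hzero : ∀ x ∈ G ∩ (closure U ∩ closure W), v x = 0 := fun x hx ↦ not_not.1 fun hvx ↦
    notMem_union_of_mem_closure_inter_closure hU hW hUW hx.2 (hunion.superset ⟨hx.1, hvx⟩)
  have hmeet : (G ∩ (closure U ∩ closure W)).Nonempty :=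
    isPreconnected_closed_iff.1 hG' _ _ isClosed_closure isClosed_closure hcover
      (hUne.imp fun _ hx ↦ ⟨(hUG hx).1, subset_closure hx⟩)
      (hWne.imp fun _ hx ↦ ⟨(hWG hx).1, subset_closure hx⟩)
  obtain ⟨p, hp, hreg⟩ := h.exists_fderiv_ne_zero hG hG' hne hU hW hcover hzero hmeet
  obtain ⟨B, hBG, hB, hpB⟩ :=
    exists_isNodalChart (h.analyticOnNhd p hp.1).contDiffAt hreg (hG.mem_nhds hp.1)
  obtain ⟨s, hs, hsU, hsfr⟩ := hB.exists_nodalDomain_of_mem_closure hBG hU ⟨p, hpB, hp.2.1⟩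
  obtain ⟨t, ht, htW, htfr⟩ := hB.exists_nodalDomain_of_mem_closure hBG hW ⟨p, hpB, hp.2.2⟩
  exact ⟨s, hs, hsU, t, ht, htW, _, hB.isRegularNodalPortion hBG ⟨p, hpB, hzero p hp⟩,
    subset_inter hsfr htfr⟩

theorem IsHelmholtzSolution.exists_isRegularNodalPortion_of_cut
    (h : IsHelmholtzSolution c v G) (hG : IsOpen G) (hG' : IsPreconnected G) {V : Set (Set E)}
    (hV : V ⊆ nodalDomains G v) (hVne : V.Nonempty) (hVD : V ≠ nodalDomains G v) :
    ∃ s ∈ V, ∃ t ∈ nodalDomains G v \ V,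
      ∃ S, IsRegularNodalPortion G v S ∧ S ⊆ frontier s ∩ frontier t := by
  have hopen : ∀ s ∈ nodalDomains G v, IsOpen s :=
    isOpen_of_mem_image_connectedComponentIn (h.isOpen_setOf_ne_zero hG)
  have hdisj : (nodalDomains G v).PairwiseDisjoint id := pairwiseDisjoint_image_connectedComponentIn
  have hnonempty : ∀ s ∈ nodalDomains G v, s.Nonempty := by
    rintro _ ⟨x, hx, rfl⟩
    exact ⟨x, mem_connectedComponentIn hx⟩
  obtain ⟨s₀, hs₀⟩ := hVne
  obtain ⟨t₀, ht₀⟩ := sdiff_nonempty.2 fun hD ↦ hVD (hV.antisymm hD)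
  have hUW : Disjoint (⋃₀ V) (⋃₀ (nodalDomains G v \ V)) := by
    simp only [disjoint_sUnion_left, disjoint_sUnion_right]
    exact fun t ht s hs ↦ hdisj (hV hs) ht.1 (ne_of_mem_of_not_mem hs ht.2)
  have hunion : ⋃₀ V ∪ ⋃₀ (nodalDomains G v \ V) = {x ∈ G | v x ≠ 0} := by
    rw [← sUnion_union, union_sdiff_cancel hV]
    exact sUnion_image_connectedComponentIn
  obtain ⟨s, hs, ⟨x, hxs, s', hs', hxs'⟩, t, ht, ⟨y, hyt, t', ht', hyt'⟩, hST⟩ :=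
    h.exists_isRegularNodalPortion_of_disjoint hG hG' (isOpen_sUnion fun s hs ↦ hopen s (hV hs))
      (isOpen_sUnion fun t ht ↦ hopen t ht.1) hUW hunion
      ((hnonempty s₀ (hV hs₀)).mono (subset_sUnion_of_mem hs₀))
      ((hnonempty t₀ ht₀.1).mono (subset_sUnion_of_mem ht₀))
  rw [hdisj.elim_set hs (hV hs') x hxs hxs', hdisj.elim_set ht ht'.1 y hyt hyt'] at hST
  exact ⟨s', hs', t', ht', hST⟩

theorem stmt4_general (h : IsHelmholtzSolution c v G) (hG : IsOpen G) (hG' : IsPreconnected G) :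
    ∃ (n : ℕ∞) (A : ℕ → Set E),
      (∀ j : ℕ, (j : ℕ∞) < n → A j ∈ nodalDomains G v) ∧
      (∀ s ∈ nodalDomains G v, ∃ j : ℕ, (j : ℕ∞) < n ∧ A j = s) ∧
      (∀ i j : ℕ, (i : ℕ∞) < n → (j : ℕ∞) < n → A i = A j → i = j) ∧
      (∀ j : ℕ, 1 ≤ j → (j : ℕ∞) < n → ∃ i < j,
        ∃ S, IsRegularNodalPortion G v S ∧ S ⊆ frontier (A i) ∩ frontier (A j)) :=
  have := FiniteDimensional.proper_real E
  exists_enumeration_of_forall_cut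
    (countable_image_connectedComponentIn (h.isOpen_setOf_ne_zero hG))
    fun _ hV hVne hVD ↦ h.exists_isRegularNodalPortion_of_cut hG hG' hV hVne hVD

end HelmholtzNodalDomain

section EuclideanSpace

variable {N : ℕ}

theorem lap_eq_laplacian (v : EuclideanSpace ℝ (Fin N) → ℝ) : lap v = Δ v := by
  rw [InnerProductSpace.laplacian_eq_iteratedFDeriv_orthonormalBasis v
    (EuclideanSpace.basisFun (Fin N) ℝ)]
  simp only [EuclideanSpace.basisFun_apply]
  rfl

theorem isRegularPortion_iff {G : Set (EuclideanSpace ℝ (Fin N))}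
    {v : EuclideanSpace ℝ (Fin N) → ℝ} {S : Set (EuclideanSpace ℝ (Fin N))} :
    IsRegularPortion G v S ↔ IsRegularNodalPortion G v S := by
  simp only [IsRegularPortion, IsRegularNodalPortion, gradient, ne_eq,
    EmbeddingLike.map_eq_zero_iff]
  exact and_iff_right_of_imp fun h ↦ h.1.nonempty

end EuclideanSpace

/-- the (countably many) nodal domains of a nontrivial Helmholtz
solution can be enumerated so that each one (after the first) shares a regular
portion of the nodal set with the boundary of an earlier one. -/
theorem stmt4 {N : ℕ} (G : Set (EuclideanSpace ℝ (Fin N)))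
    (hGopen : IsOpen G) (hGconn : IsConnected G)
    (k : ℝ) (hk : 0 < k) (v : EuclideanSpace ℝ (Fin N) → ℝ)
    (hva : AnalyticOnNhd ℝ v G)
    (hHelm : ∀ x ∈ G, lap v x + k ^ 2 * v x = 0)
    (hvnt : ¬ ∀ x ∈ G, v x = 0)
    (𝒟 : Set (Set (EuclideanSpace ℝ (Fin N))))
    (h𝒟 : 𝒟 = {s | ∃ p, p ∈ G ∧ v p ≠ 0 ∧
      s = connectedComponentIn {x ∈ G | v x ≠ 0} p})
    (hcount : 𝒟.Countable) :
    ∃ (n : ℕ∞) (A : ℕ → Set (EuclideanSpace ℝ (Fin N))),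
      (∀ j : ℕ, (j : ℕ∞) < n → A j ∈ 𝒟) ∧
      (∀ s ∈ 𝒟, ∃ j : ℕ, (j : ℕ∞) < n ∧ A j = s) ∧
      (∀ i j : ℕ, (i : ℕ∞) < n → (j : ℕ∞) < n → A i = A j → i = j) ∧
      (∀ j : ℕ, 1 ≤ j → (j : ℕ∞) < n → ∃ i < j,
        ∃ S : Set (EuclideanSpace ℝ (Fin N)), IsRegularPortion G v S ∧
          S ⊆ frontier (A i) ∩ frontier (A j)) := by
  have hv : IsHelmholtzSolution (k ^ 2) v G := ⟨hva, by simpa only [lap_eq_laplacian] using hHelm⟩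
  have hD : 𝒟 = nodalDomains G v := by
    subst h𝒟
    ext s
    simp only [nodalDomains, mem_image, mem_ofPred_eq, and_assoc, eq_comm]
  simpa only [hD, isRegularPortion_iff] using stmt4_general hv hGopen hGconn.isPreconnected
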